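/- There exists a constant c > 0 such that for infinitely many natural numbers n there exist a finite connected simple graph G on n vertices with maximum degree at most 3 and a walk w on G following the LFV-v policy whose cover time is at least c·n². (In particular, the least-frequently-visited-vertex strategy can take time quadratic in n to explore a graph of maximum degree 3, such as the dual graph of a triangulation of a polygonal region.) -/

import Mathlib

/-!
Join vertices `x 0, x 1, …` in a row, with a 4-cycle (a diamond) between `x j` and `x (j + 1)`, and
hang a path of two further vertices on `x 0`. Breaking ties suitably, the policy sends the walker
from `x 0` straight through all diamonds explored so far, once around the first unexplored one, and
then all the way back to `x 0`: on the way home it goes round each diamond one and a half times,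
which restores the balance of its visit counts, and the short path at the end turns it around. So
each round explores a single diamond. After `K` rounds `x K` is still unvisited, whereas each `x j`
has been visited `2 * (K - j)` times, which already takes `K * (K + 1)` steps in total.
-/

open Finset Relation

section SerialRelation

variable {α : Type*} {r : α → α → Prop}

theorem exists_seq_of_reflTransGen (serial : ∀ a, ∃ b, r a b) {a b : α} (h : ReflTransGen r a b) :
    ∃ s : ℕ → α, s 0 = a ∧ (∃ k, s k = b) ∧ ∀ t, r (s t) (s (t + 1)) := by
  induction h using ReflTransGen.head_induction_on with
  | refl =>
    choose next r_next using serial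
    refine ⟨fun t => next^[t] b, rfl, ⟨0, rfl⟩, fun t => ?_⟩
    simpa only [Function.iterate_succ_apply'] using r_next (next^[t] b)
  | @head a c hac _ ih =>
    obtain ⟨s, rfl, ⟨k, hk⟩, hs⟩ := ih
    exact ⟨fun t => t.casesOn a s, rfl, ⟨k + 1, hk⟩, fun t => t.casesOn hac hs⟩

end SerialRelation

section Policy

variable {V W : Type*}

/-- The number of visits of `w` to `v` up to and including time `t`, written `freq_w(v, t)` in the
literature. -/
noncomputable def visitCount (w : ℕ → V) (v : V) (t : ℕ) : ℕ :=
  {t' : ℕ | t' ≤ t ∧ w t' = v}.ncard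

/-- `w` is a walk on `G` that always moves to a least frequently visited neighbour. -/
structure IsLFVWalk (G : SimpleGraph V) (w : ℕ → V) : Prop where
  adj (t : ℕ) : G.Adj (w t) (w (t + 1))
  visitCount_le (t : ℕ) (u : V) : G.Adj (w t) u → visitCount w (w (t + 1)) t ≤ visitCount w u t

section Count

variable [DecidableEq V]

theorem visitCount_eq_card_filter (w : ℕ → V) (v : V) (t : ℕ) :
    visitCount w v t = #{t' ∈ range (t + 1) | w t' = v} := by
  rw [visitCount, ← Set.ncard_coe_finset]
  congr 1
  ext t'
  simp

theorem visitCount_zero (w : ℕ → V) (v : V) :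
    visitCount w v 0 = (Pi.single (w 0) 1 : V → ℕ) v := by
  simp [visitCount_eq_card_filter, filter_singleton, Pi.single_apply, eq_comm, apply_ite card]

theorem visitCount_succ (w : ℕ → V) (v : V) (t : ℕ) :
    visitCount w v (t + 1) = visitCount w v t + (Pi.single (w (t + 1)) 1 : V → ℕ) v := by
  rw [visitCount_eq_card_filter, visitCount_eq_card_filter, range_add_one, filter_insert,
    Pi.single_apply]
  by_cases h : w (t + 1) = v
  · simp [h]
  · simp [h, Ne.symm h]

end Count

theorem sum_visitCount_le (w : ℕ → V) (S : Finset V) (t : ℕ) :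
    ∑ v ∈ S, visitCount w v t ≤ t + 1 := by
  classical
  calc ∑ v ∈ S, visitCount w v t = ∑ v ∈ S, #{t' ∈ range (t + 1) | w t' = v} :=
        sum_congr rfl fun v _ => visitCount_eq_card_filter w v t
    _ = #{t' ∈ range (t + 1) | w t' ∈ S} := sum_card_fiberwise_eq_card_filter _ _ _
    _ ≤ t + 1 := (card_filter_le _ _).trans (card_range _).le

theorem lt_of_visitCount_eq_zero {w : ℕ → V} {v : V} {k t : ℕ} (hk : visitCount w v k = 0)
    (ht : w t = v) : k < t := by
  classical
  rw [visitCount_eq_card_filter, card_eq_zero] at hk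
  by_contra! htk
  exact filter_eq_empty_iff.mp hk (mem_range.mpr (Nat.lt_succ_of_le htk)) ht

section Step

variable [DecidableEq V] [DecidableEq W]

/-- A move of the policy from state `a` to state `b`. A state consists of the visit counts, the
current visit included, and the current vertex. -/
structure LFVStep (G : SimpleGraph V) (a b : (V → ℕ) × V) : Prop where
  adj : G.Adj a.2 b.2
  le (y : V) : G.Adj a.2 y → a.1 b.2 ≤ a.1 y
  counts_eq : b.1 = a.1 + Pi.single b.2 1

/-- Reachability of states under the policy when ties may be broken at will. The number of moves is
not recorded: by `sum_visitCount_le`, the visit counts of the final state bound it from below. -/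
abbrev LFVReaches (G : SimpleGraph V) : (V → ℕ) × V → (V → ℕ) × V → Prop :=
  ReflTransGen (LFVStep G)

theorem LFVReaches.cons {G : SimpleGraph V} {c : V → ℕ} {v : V} {b : (V → ℕ) × V} (u : V)
    (adj : G.Adj v u) (le : ∀ y, G.Adj v y → c u ≤ c y)
    (h : LFVReaches G (c + Pi.single u 1, u) b) : LFVReaches G (c, v) b :=
  .head ⟨adj, le, rfl⟩ h

theorem LFVReaches.of_counts_eq {G : SimpleGraph V} {c c' : V → ℕ} {v : V} (h : c = c') :
    LFVReaches G (c, v) (c', v) :=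
  h ▸ .refl

theorem LFVReaches.comap {G : SimpleGraph V} (f : W ↪ V) {c : V → ℕ} {v : W} {b : (V → ℕ) × V}
    (h : LFVReaches G (c, f v) b) (unvisited : ∀ y ∉ Set.range f, b.1 y = 0) :
    ∃ v', f v' = b.2 ∧ LFVReaches (G.comap f) (c ∘ f, v) (b.1 ∘ f, v') := by
  induction h with
  | refl => exact ⟨v, rfl, .refl⟩
  | @tail a b _ hab ih =>
    have counts_eq (y : V) : b.1 y = a.1 y + (Pi.single b.2 1 : V → ℕ) y :=
      congrFun hab.counts_eq y
    obtain ⟨va, hva, reach⟩ := ih fun y hy => by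
      have := unvisited y hy
      rw [counts_eq] at this
      omega
    obtain ⟨vb, hvb⟩ : b.2 ∈ Set.range f := by
      by_contra hb
      have := unvisited b.2 hb
      rw [counts_eq, Pi.single_eq_same] at this
      omega
    refine ⟨vb, hvb, reach.tail ⟨?_, fun y hy => ?_, ?_⟩⟩
    · simpa only [SimpleGraph.comap_adj, hva, hvb] using hab.adj
    · rw [SimpleGraph.comap_adj, hva] at hy
      simpa only [Function.comp_apply, hvb] using hab.le _ hy
    · ext y
      simp only [Function.comp_apply, counts_eq, ← hvb, Pi.add_apply, Pi.single_apply,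
        f.injective.eq_iff]

theorem exists_lfvStep {G : SimpleGraph V} (no_isolated : ∀ v, ∃ u, G.Adj v u)
    (a : (V → ℕ) × V) : ∃ b, LFVStep G a b := by
  obtain ⟨u, hu⟩ := no_isolated a.2
  have nonempty : {y | G.Adj a.2 y}.Nonempty := ⟨u, hu⟩
  let v := Function.argminOn a.1 _ nonempty
  exact ⟨(a.1 + Pi.single v 1, v), Function.argminOn_mem a.1 _ nonempty,
    fun y hy => Function.argminOn_le a.1 _ hy, rfl⟩

theorem LFVReaches.exists_isLFVWalk {G : SimpleGraph V} (no_isolated : ∀ v, ∃ u, G.Adj v u)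
    {v : V} {b : (V → ℕ) × V} (h : LFVReaches G (Pi.single v 1, v) b) :
    ∃ w, IsLFVWalk G w ∧ ∃ k, ∀ u, visitCount w u k = b.1 u := by
  obtain ⟨s, s_zero, ⟨k, rfl⟩, step⟩ := exists_seq_of_reflTransGen (exists_lfvStep no_isolated) h
  have visitCount_eq (t : ℕ) (u : V) : visitCount (fun t => (s t).2) u t = (s t).1 u := by
    induction t with
    | zero => rw [visitCount_zero, s_zero]
    | succ t ih => rw [visitCount_succ, ih, (step t).counts_eq, Pi.add_apply]
  refine ⟨fun t => (s t).2, ⟨fun t => (step t).adj, fun t u hu => ?_⟩, k, visitCount_eq k⟩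
  simpa only [visitCount_eq] using (step t).le u hu

end Step

end Policy

/-- The vertices of the diamond chain. The `j`-th diamond is the 4-cycle `p j`, `s j`, `q (j + 1)`,
`t (j + 1)`; it lies between the joints `x j` and `x (j + 1)`. The remaining vertices `q 0` and
`t 0` form the path that hangs on `x 0`. -/
inductive ChainVertex
  | t (j : ℕ)
  | q (j : ℕ)
  | x (j : ℕ)
  | p (j : ℕ)
  | s (j : ℕ)
  deriving DecidableEq

namespace ChainVertex

/-- The position of a vertex in an enumeration of the diamond chain from the hanging path onwards,
used to cut off finite pieces of the chain. -/
def rank : ChainVertex → ℕ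
  | t j => 5 * j
  | q j => 5 * j + 1
  | x j => 5 * j + 2
  | p j => 5 * j + 3
  | s j => 5 * j + 4

theorem rank_injective : Function.Injective rank := by
  rintro (i | i | i | i | i) (j | j | j | j | j) h <;> simp only [rank] at h <;>
    first | omega | (congr 1; omega)

theorem rank_surjective : Function.Surjective rank := by
  intro n
  have : n % 5 < 5 := n.mod_lt (by norm_num)
  obtain h | h | h | h | h : n = 5 * (n / 5) ∨ n = 5 * (n / 5) + 1 ∨ n = 5 * (n / 5) + 2 ∨
      n = 5 * (n / 5) + 3 ∨ n = 5 * (n / 5) + 4 := by omega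
  exacts [⟨t _, h.symm⟩, ⟨q _, h.symm⟩, ⟨x _, h.symm⟩, ⟨p _, h.symm⟩, ⟨s _, h.symm⟩]

/-- The enumeration of the first `n` vertices of the diamond chain. -/
noncomputable def ofFin (n : ℕ) : Fin n ↪ ChainVertex :=
  Fin.valEmbedding.trans (Equiv.ofBijective rank ⟨rank_injective, rank_surjective⟩).symm.toEmbedding

@[simp]
theorem rank_ofFin {n : ℕ} (i : Fin n) : (ofFin n i).rank = i :=
  Equiv.ofBijective_apply_symm_apply rank ⟨rank_injective, rank_surjective⟩ _

theorem ofFin_rank {n : ℕ} {v : ChainVertex} (hv : v.rank < n) : ofFin n ⟨v.rank, hv⟩ = v :=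
  rank_injective (rank_ofFin _)

theorem mem_range_ofFin {n : ℕ} {v : ChainVertex} : v ∈ Set.range (ofFin n) ↔ v.rank < n :=
  ⟨by rintro ⟨i, rfl⟩; simp, fun hv => ⟨_, ofFin_rank hv⟩⟩

/-- The vertices adjacent to a vertex in the diamond chain. -/
def neighbors : ChainVertex → Finset ChainVertex
  | t 0 => {q 0}
  | t (j + 1) => {p j, q (j + 1)}
  | q 0 => {t 0, x 0}
  | q (j + 1) => {s j, t (j + 1), x (j + 1)}
  | x j => {q j, p j}
  | p j => {x j, s j, t (j + 1)}
  | s j => {p j, q (j + 1)}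

theorem card_neighbors_le (v : ChainVertex) : #(neighbors v) ≤ 3 := by
  unfold neighbors
  split
  exacts [by simp, card_le_two.trans (by simp), card_le_two.trans (by simp), card_le_three,
    card_le_two.trans (by simp), card_le_three, card_le_two.trans (by simp)]

theorem mem_neighbors_comm {u v : ChainVertex} (h : v ∈ neighbors u) : u ∈ neighbors v := by
  cases u using neighbors.fun_cases <;> cases v using neighbors.fun_cases <;>
    simp_all [neighbors]

theorem exists_mem_neighbors_rank_lt {v : ChainVertex} (hv : v ≠ t 0) :
    ∃ u ∈ neighbors v, u.rank < v.rank := by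
  match v with
  | t 0 => exact absurd rfl hv
  | t (j + 1) => exact ⟨p j, by simp [neighbors], by simp only [rank]; omega⟩
  | q 0 => exact ⟨t 0, by simp [neighbors], by simp [rank]⟩
  | q (j + 1) => exact ⟨t (j + 1), by simp [neighbors], by simp [rank]⟩
  | x j => exact ⟨q j, by simp [neighbors], by simp [rank]⟩
  | p j => exact ⟨x j, by simp [neighbors], by simp [rank]⟩
  | s j => exact ⟨p j, by simp [neighbors], by simp [rank]⟩

end ChainVertex

section DiamondChain

open ChainVertex

/-- The infinite diamond chain. -/
def diamondChain : SimpleGraph ChainVertex where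
  Adj u v := v ∈ neighbors u
  symm := ⟨fun _ _ => mem_neighbors_comm⟩
  loopless := ⟨fun v => by cases v using neighbors.fun_cases <;> simp [neighbors]⟩

/-- The part of the diamond chain induced on its first `n` vertices. -/
noncomputable def initialChain (n : ℕ) : SimpleGraph (Fin n) :=
  diamondChain.comap (ofFin n)

theorem initialChain_connected {n : ℕ} (hn : 0 < n) : (initialChain n).Connected := by
  have : Nonempty (Fin n) := ⟨⟨0, hn⟩⟩
  have reachable (v : Fin n) : (initialChain n).Reachable v ⟨0, hn⟩ := by
    induction v using WellFoundedLT.induction with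
    | _ v ih =>
      by_cases hv : ofFin n v = t 0
      · rw [show v = ⟨0, hn⟩ from Fin.ext (by rw [← rank_ofFin v, hv, rank])]
      · obtain ⟨u, hu, hlt⟩ := exists_mem_neighbors_rank_lt hv
        rw [rank_ofFin] at hlt
        obtain ⟨i, rfl⟩ := mem_range_ofFin.mpr (hlt.trans v.isLt)
        have adj : (initialChain n).Adj v i := hu
        exact adj.reachable.trans (ih i (by simpa using hlt))
  exact ⟨fun u v => (reachable u).trans (reachable v).symm⟩

theorem ncard_initialChain_adj_le {n : ℕ} (v : Fin n) :
    {u | (initialChain n).Adj v u}.ncard ≤ 3 :=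
  calc {u | (initialChain n).Adj v u}.ncard
      ≤ (neighbors (ofFin n v) : Set ChainVertex).ncard :=
        Set.ncard_le_ncard_of_injOn (ofFin n) (fun _ hu => hu) (ofFin n).injective.injOn
    _ ≤ 3 := (Set.ncard_coe_finset _).trans_le (card_neighbors_le _)

/-- The visit counts after `m` rounds, without the visit of `x 0` that starts the next round.
Truncated subtraction makes them zero for every vertex that has not yet been reached. -/
def roundCount (m : ℕ) : ChainVertex → ℕ
  | t j => 2 * (m + 1 - j) - 1
  | q j => 3 * (m + 1 - j) - 2
  | x j => 2 * (m - j)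
  | p j => 3 * (m - j) - 1
  | s j => 2 * (m - j) - 1

/-- The visit counts after `m` rounds once the walker has reached `x i` on the way out. -/
def outCount (m i : ℕ) : ChainVertex → ℕ
  | t j => roundCount m (t j)
  | q j => roundCount m (q j) + if 0 < j ∧ j ≤ i then 1 else 0
  | x j => roundCount m (x j) + if j ≤ i then 1 else 0
  | p j => roundCount m (p j) + if j < i then 1 else 0
  | s j => roundCount m (s j) + if j < i then 1 else 0

/-- The visit counts after `m` rounds once the walker has come back to `x i` on the way home. -/
def homeCount (m i : ℕ) : ChainVertex → ℕ
  | t j => if i < j then roundCount (m + 1) (t j) else outCount m m (t j)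
  | q j => if i < j then roundCount (m + 1) (q j) else outCount m m (q j)
  | x j => if i ≤ j then roundCount (m + 1) (x j) else outCount m m (x j)
  | p j => if i ≤ j then roundCount (m + 1) (p j) else outCount m m (p j)
  | s j => if i ≤ j then roundCount (m + 1) (s j) else outCount m m (s j)

theorem reaches_outward {m i : ℕ} (hi : i < m) :
    LFVReaches diamondChain (outCount m i, x i) (outCount m (i + 1), x (i + 1)) := by
  refine .cons (p i) ?_ ?_ <| .cons (s i) ?_ ?_ <| .cons (q (i + 1)) ?_ ?_ <|
    .cons (x (i + 1)) ?_ ?_ <| .of_counts_eq ?counts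
  case counts =>
    ext (_ | _ | _ | _ | _) <;>
      simp only [outCount, roundCount, Pi.add_apply, Pi.single_apply] <;> grind
  all_goals
    simp only [diamondChain, neighbors, outCount, roundCount, Pi.add_apply, Pi.single_apply]
    grind

theorem reaches_turn (m : ℕ) :
    LFVReaches diamondChain (outCount m m, x m) (homeCount m m, x m) := by
  refine .cons (p m) ?_ ?_ <| .cons (s m) ?_ ?_ <| .cons (q (m + 1)) ?_ ?_ <|
    .cons (t (m + 1)) ?_ ?_ <| .cons (p m) ?_ ?_ <| .cons (x m) ?_ ?_ <| .of_counts_eq ?counts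
  case counts =>
    ext (_ | _ | _ | _ | _) <;>
      simp only [homeCount, outCount, roundCount, Pi.add_apply, Pi.single_apply] <;> grind
  all_goals
    simp only [diamondChain, neighbors, outCount, roundCount, Pi.add_apply, Pi.single_apply]
    grind

theorem reaches_homeward {m i : ℕ} (hi : i < m) :
    LFVReaches diamondChain (homeCount m (i + 1), x (i + 1)) (homeCount m i, x i) := by
  refine .cons (q (i + 1)) ?_ ?_ <| .cons (t (i + 1)) ?_ ?_ <| .cons (p i) ?_ ?_ <|
    .cons (s i) ?_ ?_ <| .cons (q (i + 1)) ?_ ?_ <| .cons (t (i + 1)) ?_ ?_ <|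
    .cons (p i) ?_ ?_ <| .cons (x i) ?_ ?_ <| .of_counts_eq ?counts
  case counts =>
    ext (_ | _ | _ | _ | _) <;>
      simp only [homeCount, outCount, roundCount, Pi.add_apply, Pi.single_apply] <;> grind
  all_goals
    simp only [diamondChain, neighbors, homeCount, outCount, roundCount, Pi.add_apply,
      Pi.single_apply]
    grind

theorem reaches_restart (m : ℕ) :
    LFVReaches diamondChain (homeCount m 0, x 0) (outCount (m + 1) 0, x 0) := by
  refine .cons (q 0) ?_ ?_ <| .cons (t 0) ?_ ?_ <| .cons (q 0) ?_ ?_ <| .cons (t 0) ?_ ?_ <|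
    .cons (q 0) ?_ ?_ <| .cons (x 0) ?_ ?_ <| .of_counts_eq ?counts
  case counts =>
    ext (_ | _ | _ | _ | _) <;>
      simp only [homeCount, outCount, roundCount, Pi.add_apply, Pi.single_apply] <;> grind
  all_goals
    simp only [diamondChain, neighbors, homeCount, outCount, roundCount, Pi.add_apply,
      Pi.single_apply]
    grind

theorem reaches_last_joint {m i : ℕ} (hi : i ≤ m) :
    LFVReaches diamondChain (outCount m 0, x 0) (outCount m i, x i) := by
  induction i with
  | zero => exact .refl
  | succ i ih => exact (ih (by omega)).trans (reaches_outward hi)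

theorem reaches_first_joint {m i : ℕ} (hi : i ≤ m) :
    LFVReaches diamondChain (homeCount m i, x i) (homeCount m 0, x 0) := by
  induction i with
  | zero => exact .refl
  | succ i ih => exact (reaches_homeward hi).trans (ih (by omega))

theorem reaches_next_round (m : ℕ) :
    LFVReaches diamondChain (outCount m 0, x 0) (outCount (m + 1) 0, x 0) :=
  calc LFVReaches diamondChain (outCount m 0, x 0) (outCount m m, x m) := reaches_last_joint le_rfl
    LFVReaches diamondChain _ (homeCount m m, x m) := reaches_turn m
    LFVReaches diamondChain _ (homeCount m 0, x 0) := reaches_first_joint le_rfl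
    LFVReaches diamondChain _ (outCount (m + 1) 0, x 0) := reaches_restart m

theorem reaches_first_round :
    LFVReaches diamondChain (Pi.single (t 0) 1, t 0) (outCount 0 0, x 0) := by
  refine .cons (q 0) ?_ ?_ <| .cons (x 0) ?_ ?_ <| .of_counts_eq ?counts
  case counts =>
    ext (_ | _ | _ | _ | _) <;>
      simp only [outCount, roundCount, Pi.add_apply, Pi.single_apply] <;> grind
  all_goals
    simp only [diamondChain, neighbors, Pi.add_apply, Pi.single_apply]
    grind

theorem reaches_round (K : ℕ) :
    LFVReaches diamondChain (Pi.single (t 0) 1, t 0) (outCount K 0, x 0) := by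
  induction K with
  | zero => exact reaches_first_round
  | succ K ih => exact ih.trans (reaches_next_round K)

theorem outCount_eq_zero {K : ℕ} (hK : 0 < K) {v : ChainVertex} (hv : (x K).rank ≤ v.rank) :
    outCount K 0 v = 0 := by
  cases v <;> simp only [rank] at hv <;> simp only [outCount, roundCount] <;> grind

theorem le_sum_outCount_x (K : ℕ) : K * (K + 1) ≤ ∑ j ∈ range (K + 1), outCount K 0 (x j) :=
  calc K * (K + 1) = ∑ j ∈ range (K + 1), j * 2 := by
        rw [← sum_mul, sum_range_id_mul_two, Nat.add_sub_cancel, mul_comm]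
    _ = ∑ j ∈ range (K + 1), (K - j) * 2 := (sum_range_reflect (· * 2) (K + 1)).symm
    _ ≤ ∑ j ∈ range (K + 1), outCount K 0 (x j) := sum_le_sum fun j _ => by
        simp only [outCount, roundCount]
        omega

theorem exists_isLFVWalk_initialChain {n : ℕ} (hn : 1 < n) {b : (ChainVertex → ℕ) × ChainVertex}
    (reach : LFVReaches diamondChain (Pi.single (t 0) 1, t 0) b)
    (unvisited : ∀ v, n ≤ v.rank → b.1 v = 0) :
    ∃ w, IsLFVWalk (initialChain n) w ∧ ∃ k, ∀ i, visitCount w i k = b.1 (ofFin n i) := by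
  have : Nontrivial (Fin n) := Fin.nontrivial_iff_two_le.mpr hn
  obtain ⟨i, hi⟩ : t 0 ∈ Set.range (ofFin n) := mem_range_ofFin.mpr (by simp only [rank]; omega)
  rw [← hi] at reach
  obtain ⟨_, _, reach⟩ := reach.comap (ofFin n) fun v hv =>
    unvisited v (not_lt.mp (mem_range_ofFin.not.mp hv))
  rw [Pi.single, Function.update_comp_eq_of_injective _ (ofFin n).injective] at reach
  exact reach.exists_isLFVWalk
    (initialChain_connected (by omega)).preconnected.exists_adj_of_nontrivial

theorem exists_slow_isLFVWalk {K : ℕ} (hK : 0 < K) :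
    ∃ w, IsLFVWalk (initialChain (5 * K + 3)) w ∧ ∃ v, ∀ t, w t = v → K * (K + 1) ≤ t := by
  obtain ⟨w, hw, k, visitCount_eq⟩ := exists_isLFVWalk_initialChain (n := 5 * K + 3) (by omega)
    (reaches_round K) fun _ hv => outCount_eq_zero hK ((x K).rank.le_succ.trans hv)
  have rank_x_lt (j : Fin (K + 1)) : (x j).rank < 5 * K + 3 := by simp only [rank]; omega
  let joint (j : Fin (K + 1)) : Fin (5 * K + 3) := ⟨(x j).rank, rank_x_lt j⟩
  have joint_injective : joint.Injective := fun _ _ h =>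
    Fin.ext (x.inj (rank_injective (Fin.mk.inj h)))
  have visitCount_joint (j : Fin (K + 1)) : visitCount w (joint j) k = outCount K 0 (x j) := by
    rw [visitCount_eq, ofFin_rank]
  have le_k : K * (K + 1) ≤ k + 1 :=
    calc K * (K + 1) ≤ ∑ j ∈ range (K + 1), outCount K 0 (x j) := le_sum_outCount_x K
      _ = ∑ j, visitCount w (joint j) k := by simp only [sum_range, visitCount_joint]
      _ = ∑ v ∈ univ.image joint, visitCount w v k := by
        rw [sum_image joint_injective.injOn]
      _ ≤ k + 1 := sum_visitCount_le w _ k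
  have unvisited : visitCount w (joint (.last K)) k = 0 :=
    (visitCount_joint _).trans (outCount_eq_zero hK le_rfl)
  exact ⟨w, hw, joint (.last K), fun t ht => le_k.trans (lt_of_visitCount_eq_zero unvisited ht)⟩

end DiamondChain

/-- There is a constant `c > 0` such that for infinitely many `n` there is a connected
simple graph on `n` vertices of maximum degree at most `3` and a walk following the
LFV-v (least-frequently-visited vertex) policy whose cover time is at least `c * n ^ 2`. -/
theorem lfv_v_quadratic_lower_bound :
    ∃ c : ℝ, 0 < c ∧
      ∀ N : ℕ, ∃ n : ℕ, N ≤ n ∧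
        ∃ G : SimpleGraph (Fin n),
          G.Connected ∧
          (∀ v : Fin n, {u : Fin n | G.Adj v u}.ncard ≤ 3) ∧
          ∃ w : ℕ → Fin n,
            -- `w` is a walk on `G`
            (∀ t : ℕ, G.Adj (w t) (w (t + 1))) ∧
            -- `w` follows the LFV-v policy
            (∀ t : ℕ, ∀ u : Fin n, G.Adj (w t) u →
              {t' : ℕ | t' ≤ t ∧ w t' = w (t + 1)}.ncard ≤
                {t' : ℕ | t' ≤ t ∧ w t' = u}.ncard) ∧
            -- the cover time of `w` is at least `c * n ^ 2`
            ∃ v : Fin n, ∀ t : ℕ, (t : ℝ) < c * (n : ℝ) ^ 2 → w t ≠ v := by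
  refine ⟨1 / 32, by norm_num, fun N => ?_⟩
  obtain ⟨w, hw, v, cover_time⟩ := exists_slow_isLFVWalk N.succ_pos
  refine ⟨5 * (N + 1) + 3, by omega, initialChain _, initialChain_connected (by omega),
    ncard_initialChain_adj_le, w, hw.adj, hw.visitCount_le, v, fun t ht hwt => ?_⟩
  have quadratic_le : ((N + 1) * (N + 2) : ℝ) ≤ t := mod_cast cover_time t hwt
  push_cast at ht
  nlinarith [N.cast_nonneg (α := ℝ)]
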